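/- A trace-free Codazzi tensor on the round unit sphere S^n(1) (n ≥ 2) vanishes identically. Consequently, for an infinitesimal isometric deformation k of S^n(1) ⊂ R^{n+1} with k^T = 0 on the sphere, the linearized second fundamental form A'_k, which is a trace-free Codazzi tensor, must vanish. -/

import Mathlib

open scoped RealInnerProductSpace

noncomputable section

variable {n : ℕ}

/-- Orthogonal projection onto the tangent space of the unit sphere at p (for ‖p‖ = 1). -/
def tanProj (p v : EuclideanSpace ℝ (Fin (n+1))) : EuclideanSpace ℝ (Fin (n+1)) :=
  v - (⟪v, p⟫) • p

/-- The covariant derivative (∇_X T)(Y,Z) at p ∈ S^n(1) of a 2-tensor T on the sphere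
(given as an ambient bilinear-form-valued map), for tangent vectors X, Y, Z at p:
the Levi–Civita connection of the round sphere is the tangential projection of the
Euclidean derivative, and Ỹ(x) = tanProj x Y, Z̃(x) = tanProj x Z are tangent extensions
of Y, Z. -/
def covDerivT (T : EuclideanSpace ℝ (Fin (n+1)) →
      EuclideanSpace ℝ (Fin (n+1)) →L[ℝ] EuclideanSpace ℝ (Fin (n+1)) →L[ℝ] ℝ)
    (p X Y Z : EuclideanSpace ℝ (Fin (n+1))) : ℝ :=
  fderiv ℝ (fun x => T x (tanProj x Y) (tanProj x Z)) p X
    - T p (tanProj p (fderiv ℝ (fun x => tanProj x Y) p X)) Z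
    - T p Y (tanProj p (fderiv ℝ (fun x => tanProj x Z) p X))

/-- A trace-free Codazzi tensor on the round unit sphere S^n(1) ⊂ ℝ^{n+1}: a C¹
symmetric 2-tensor field on the sphere (represented by tangential ambient bilinear
forms) satisfying the Codazzi equation (∇_X T)(Y,Z) = (∇_Y T)(X,Z) and tr_γ T = 0. -/
structure IsTraceFreeCodazziSphere
    (T : EuclideanSpace ℝ (Fin (n+1)) →
      EuclideanSpace ℝ (Fin (n+1)) →L[ℝ] EuclideanSpace ℝ (Fin (n+1)) →L[ℝ] ℝ) : Prop where
  diff : Differentiable ℝ T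
  symm : ∀ p x y, T p x y = T p y x
  tangential : ∀ p ∈ Metric.sphere (0 : EuclideanSpace ℝ (Fin (n+1))) 1, ∀ x, T p p x = 0
  codazzi : ∀ p ∈ Metric.sphere (0 : EuclideanSpace ℝ (Fin (n+1))) 1, ∀ X Y Z,
    ⟪X, p⟫ = 0 → ⟪Y, p⟫ = 0 → ⟪Z, p⟫ = 0 →
      covDerivT T p X Y Z = covDerivT T p Y X Z
  traceFree : ∀ p ∈ Metric.sphere (0 : EuclideanSpace ℝ (Fin (n+1))) 1,
    ∑ i, T p (EuclideanSpace.single i (1:ℝ)) (EuclideanSpace.single i (1:ℝ)) = 0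

end

/-!
Extend a trace-free Codazzi tensor `T` on `S^n(1)` to `S x = ‖x‖⁻¹ • T (‖x‖⁻¹ • x)` on `ℝⁿ⁺¹ ∖ 0`.
For this degree of homogeneity the Codazzi equation of `T` becomes the flat one
`DS(x) a b = DS(x) b a`, with no correction in the radial direction. Hence each row `ω = S(·) z` is
a closed one-form; it is divergence-free because `S` is symmetric and trace-free, and it kills the
radial direction because `T` is tangential. As `n + 1 > 2`, closedness gives `ω = du` on all of
`ℝⁿ⁺¹ ∖ 0`. For a radial cutoff `ψ` vanishing near `0` one finds `div (ψ u ω) = ψ |ω|²`, and the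
divergence theorem forces `ω = 0`.
For `n = 1` the angular form `dθ` has all these properties of `ω` without being exact.
-/

section Poincare

variable {E F : Type*} [NormedAddCommGroup E] [NormedSpace ℝ E] [NormedAddCommGroup F]
  [NormedSpace ℝ F] {ω : E → E →L[ℝ] F}

theorem exists_forall_hasFDerivAt_of_starConvex [CompleteSpace F] {U : Set E} {a : E}
    (hU : IsOpen U) (hstar : StarConvex ℝ a U) (hω : DifferentiableOn ℝ ω U)
    (hsymm : ∀ x ∈ U, ∀ v w, fderiv ℝ ω x v w = fderiv ℝ ω x w v) :
    ∃ f : E → F, ∀ x ∈ U, HasFDerivAt f (ω x) x := by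
  refine ⟨fun x ↦ ∫ᶜ y in .segment a x, ω y, fun x hx ↦ ?_⟩
  have hcompact : IsCompact (segment ℝ a x) := by
    rw [segment_eq_image_lineMap]
    exact isCompact_Icc.image AffineMap.lineMap_continuous
  obtain ⟨δ, hδ, hsub⟩ := hcompact.exists_thickening_subset_open hU (hstar.segment_subset hx)
  have hopen : IsOpen (Metric.thickening δ (segment ℝ a x)) := Metric.isOpen_thickening
  have hmem {y : E} (hy : y ∈ segment ℝ a x) : y ∈ Metric.thickening δ (segment ℝ a x) :=
    Metric.self_subset_thickening hδ _ hy
  have hx' := hmem (right_mem_segment ℝ a x)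
  refine HasFDerivWithinAt.hasFDerivAt ?_ (hopen.mem_nhds hx')
  exact ((convex_segment a x).thickening
    δ).hasFDerivWithinAt_curveIntegral_segment_of_hasFDerivWithinAt_symmetric
    (fun y hy ↦ (hω.differentiableAt (hU.mem_nhds (hsub hy))).hasFDerivAt.hasFDerivWithinAt)
    (fun y hy v _ w _ ↦ hsymm y (hsub hy) v w) (hmem (left_mem_segment ℝ a x)) hx'

theorem exists_forall_hasFDerivAt_union {U V : Set E} (hU : IsOpen U) (hV : IsOpen V)
    (hUV : IsPreconnected (U ∩ V)) {f g : E → F} (hf : ∀ x ∈ U, HasFDerivAt f (ω x) x)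
    (hg : ∀ x ∈ V, HasFDerivAt g (ω x) x) :
    ∃ h : E → F, ∀ x ∈ U ∪ V, HasFDerivAt h (ω x) x := by
  classical
  obtain ⟨c, hc⟩ : ∃ c, (U ∩ V).EqOn f (g · + c) :=
    (hU.inter hV).exists_eq_add_of_fderiv_eq (𝕜 := ℝ) hUV
      (fun x hx ↦ (hf x hx.1).differentiableAt.differentiableWithinAt)
      (fun x hx ↦ (hg x hx.2).differentiableAt.differentiableWithinAt)
      (fun x hx ↦ by rw [(hf x hx.1).fderiv, (hg x hx.2).fderiv])
  refine ⟨U.piecewise f (g · + c), ?_⟩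
  rintro x (hx | hx)
  · exact (hf x hx).congr_of_eventuallyEq
      ((Set.piecewise_eqOn U f _).eventuallyEq_of_mem (hU.mem_nhds hx))
  · refine ((hg x hx).add_const c).congr_of_eventuallyEq ?_
    filter_upwards [hV.mem_nhds hx] with y hyV
    by_cases hyU : y ∈ U
    · rw [Set.piecewise_eq_of_mem _ _ _ hyU, hc ⟨hyU, hyV⟩]
    · rw [Set.piecewise_eq_of_notMem _ _ _ hyU]

/-- The closed ray from the origin through `-e`, for `e ≠ 0`; removing it leaves a slit space
which is star-convex about `e`. -/
def oppositeRay (e : E) : Set E := (fun t : ℝ ↦ t • e) '' Set.Iic (0 : ℝ)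

theorem isClosed_oppositeRay {e : E} (he : e ≠ 0) : IsClosed (oppositeRay e) :=
  (isClosedEmbedding_smul_left he).isClosedMap _ isClosed_Iic

theorem starConvex_compl_oppositeRay {e : E} (he : e ≠ 0) :
    StarConvex ℝ e (oppositeRay e)ᶜ := by
  rintro x hx a b ha hb hab ⟨t, ht, hte : t • e = a • e + b • x⟩
  have ht : t ≤ 0 := ht
  have hbx : b • x = (t - a) • e := by rw [sub_smul, hte, add_sub_cancel_left]
  rcases hb.eq_or_lt' with rfl | hb
  · have hta : t - a = 0 := (smul_eq_zero_iff_left he).1 (by rw [← hbx, zero_smul])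
    linarith
  · refine hx ⟨b⁻¹ * (t - a), ?_, ?_⟩
    · exact mul_nonpos_of_nonneg_of_nonpos (inv_nonneg.2 hb.le) (by linarith)
    · change (b⁻¹ * (t - a)) • e = x
      rw [mul_smul, ← hbx, inv_smul_smul₀ hb.ne']

theorem oppositeRay_union_neg (e : E) :
    oppositeRay e ∪ oppositeRay (-e) = (Submodule.span ℝ {e} : Set E) := by
  ext x
  simp only [oppositeRay, Set.mem_union, Set.mem_image, Set.mem_Iic, SetLike.mem_coe,
    Submodule.mem_span_singleton]
  constructor
  · rintro (⟨t, -, rfl⟩ | ⟨t, -, rfl⟩)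
    exacts [⟨t, rfl⟩, ⟨-t, by simp⟩]
  · rintro ⟨t, rfl⟩
    rcases le_total t 0 with ht | ht
    exacts [.inl ⟨t, ht, rfl⟩, .inr ⟨-t, by simpa, by simp⟩]

theorem oppositeRay_inter_neg {e : E} (he : e ≠ 0) :
    oppositeRay e ∩ oppositeRay (-e) = {0} := by
  ext x
  constructor
  · rintro ⟨⟨t, ht : t ≤ 0, rfl⟩, s, hs : s ≤ 0, hst : s • -e = t • e⟩
    have h : t + s = 0 := (smul_eq_zero_iff_left he).1 (by rw [add_smul, ← hst]; simp)
    rw [Set.mem_singleton_iff, show t = 0 by linarith]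
    exact zero_smul ℝ e
  · rintro rfl
    exact ⟨⟨0, by simp⟩, ⟨0, by simp⟩⟩

theorem exists_forall_hasFDerivAt_of_two_lt_rank [CompleteSpace F] (hE : 2 < Module.rank ℝ E)
    (hω : ∀ x ≠ 0, DifferentiableAt ℝ ω x)
    (hsymm : ∀ x ≠ 0, ∀ v w, fderiv ℝ ω x v w = fderiv ℝ ω x w v) :
    ∃ f : E → F, ∀ x ≠ 0, HasFDerivAt f (ω x) x := by
  have : Nontrivial E := rank_pos_iff_nontrivial.1 (zero_le_two.trans_lt hE)
  obtain ⟨e, he⟩ := exists_ne (0 : E)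
  have hslit {v : E} (hv : v ≠ 0) :
      ∃ f : E → F, ∀ x ∈ (oppositeRay v)ᶜ, HasFDerivAt f (ω x) x := by
    have hne : ∀ x ∈ (oppositeRay v)ᶜ, x ≠ 0 := by
      rintro x hx rfl
      exact hx ⟨0, by simp⟩
    exact exists_forall_hasFDerivAt_of_starConvex (isClosed_oppositeRay hv).isOpen_compl
      (starConvex_compl_oppositeRay hv) (fun x hx ↦ (hω x (hne x hx)).differentiableWithinAt)
      fun x hx ↦ hsymm x (hne x hx)
  have hconn : IsPreconnected ((oppositeRay e)ᶜ ∩ (oppositeRay (-e))ᶜ) := by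
    rw [← Set.compl_union, oppositeRay_union_neg]
    refine (isConnected_compl_of_one_lt_codim ?_).isPreconnected
    by_contra! hle
    have := Submodule.rank_quotient_add_rank (Submodule.span ℝ {e})
    refine hE.not_ge ?_
    rw [← this, ← one_add_one_eq_two]
    exact add_le_add hle ((rank_span_le _).trans (by simp))
  obtain ⟨f, hf⟩ := hslit he
  obtain ⟨g, hg⟩ := hslit (neg_ne_zero.2 he)
  obtain ⟨h, hh⟩ := exists_forall_hasFDerivAt_union (isClosed_oppositeRay he).isOpen_compl
    (isClosed_oppositeRay (neg_ne_zero.2 he)).isOpen_compl hconn hf hg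
  refine ⟨h, fun x hx ↦ hh x ?_⟩
  rwa [← Set.compl_inter, oppositeRay_inter_neg he, Set.mem_compl_singleton_iff]

end Poincare

section Cutoff

open Filter Topology

theorem exists_radial_cutoff {E : Type*} [NormedAddCommGroup E] [InnerProductSpace ℝ E]
    [ProperSpace E] {x₀ : E} (hx₀ : x₀ ≠ 0) :
    ∃ ψ : E → ℝ, Differentiable ℝ ψ ∧ HasCompactSupport ψ ∧ 0 ≤ ψ ∧ ψ x₀ = 1 ∧ ψ =ᶠ[𝓝 0] 0 ∧
      ∀ x, ∃ a : ℝ, fderiv ℝ ψ x = a • innerSL ℝ x := by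
  have hc : 0 < ‖x₀‖ ^ 2 := by positivity
  let φ : ContDiffBump (‖x₀‖ ^ 2) := ⟨‖x₀‖ ^ 2 / 4, ‖x₀‖ ^ 2 / 2, by linarith, by linarith⟩
  have hφ : Differentiable ℝ φ := (φ.contDiff (n := 1)).differentiable one_ne_zero
  have hsq : Differentiable ℝ fun x : E ↦ ‖x‖ ^ 2 := differentiable_id.norm_sq ℝ
  refine ⟨fun x ↦ φ (‖x‖ ^ 2), hφ.comp hsq, ?_, fun x ↦ φ.nonneg,
    φ.one_of_mem_closedBall (Metric.mem_closedBall_self φ.rIn_pos.le), ?_, fun x ↦ ?_⟩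
  · refine .of_support_subset_isCompact (isCompact_closedBall 0 (2 * ‖x₀‖)) fun x hx ↦ ?_
    have hlt : dist (‖x‖ ^ 2) (‖x₀‖ ^ 2) < ‖x₀‖ ^ 2 / 2 := φ.support_eq.subset hx
    rw [Real.dist_eq, abs_lt] at hlt
    rw [mem_closedBall_zero_iff]
    exact abs_le_of_sq_le_sq' (by nlinarith) (by positivity) |>.2
  · have hlim : Tendsto (fun x : E ↦ dist (‖x‖ ^ 2) (‖x₀‖ ^ 2)) (𝓝 0) (𝓝 (‖x₀‖ ^ 2)) := by
      have : Continuous fun x : E ↦ dist (‖x‖ ^ 2) (‖x₀‖ ^ 2) := by fun_prop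
      simpa using this.tendsto 0
    filter_upwards [hlim.eventually_const_lt (half_lt_self hc)] with x hx
    exact φ.zero_of_le_dist hx.le
  · refine ⟨2 * deriv φ (‖x‖ ^ 2), ?_⟩
    rw [fderiv_fun_comp x (hφ _) (hsq x), fderiv_norm_sq_apply]
    ext v
    simp [fderiv_eq_smul_deriv, mul_comm, mul_left_comm]

theorem differentiable_smul_of_eventuallyEq_zero {E F : Type*} [NormedAddCommGroup E]
    [NormedSpace ℝ E] [NormedAddCommGroup F] [NormedSpace ℝ F] {ψ : E → ℝ} {g : E → F} {a : E}
    (hψ : Differentiable ℝ ψ) (hψa : ψ =ᶠ[𝓝 a] 0) (hg : ∀ x ≠ a, DifferentiableAt ℝ g x) :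
    Differentiable ℝ fun x ↦ ψ x • g x := by
  intro x
  rcases eq_or_ne x a with rfl | hx
  · refine (differentiableAt_const (0 : F)).congr_of_eventuallyEq ?_
    filter_upwards [hψa] with y hy
    simp [hy]
  · exact (hψ x).smul (hg x hx)

end Cutoff

section BilinearField

open Filter Topology

variable {E F : Type*} [NormedAddCommGroup E] [NormedSpace ℝ E] [NormedAddCommGroup F]
  [NormedSpace ℝ F] {x : E}

theorem fderiv_apply_self_eq_neg {ω : E → E →L[ℝ] F} (hω : DifferentiableAt ℝ ω x)
    (h : ∀ᶠ y in 𝓝 x, ω y y = 0) (v : E) : fderiv ℝ ω x v x = -ω x v := by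
  have hzero : fderiv ℝ (fun y ↦ ω y y) x = 0 := by
    rw [EventuallyEq.fderiv_eq h]
    simp
  have := DFunLike.congr_fun hzero v
  rw [fderiv_clm_apply hω differentiableAt_fun_id] at this
  exact eq_neg_of_add_eq_zero_right (by simpa using this)

variable {S : E → E →L[ℝ] E →L[ℝ] F}

theorem fderiv_apply_const (hS : DifferentiableAt ℝ S x) (v a : E) :
    fderiv ℝ (fun y ↦ S y a) x v = fderiv ℝ S x v a := by
  simp [fderiv_clm_apply hS (differentiableAt_const a)]

theorem fderiv_apply_const_const (hS : DifferentiableAt ℝ S x) (v a b : E) :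
    fderiv ℝ (fun y ↦ S y a b) x v = fderiv ℝ S x v a b := by
  rw [fderiv_clm_apply (hS.clm_apply (differentiableAt_const a)) (differentiableAt_const b)]
  simp [fderiv_apply_const hS]

theorem fderiv_apply_comm (hS : DifferentiableAt ℝ S x)
    (hsymm : ∀ᶠ y in 𝓝 x, ∀ a b, S y a b = S y b a) (v a b : E) :
    fderiv ℝ S x v a b = fderiv ℝ S x v b a := by
  have : (fun y ↦ S y a b) =ᶠ[𝓝 x] fun y ↦ S y b a := hsymm.mono fun y hy ↦ hy a b
  rw [← fderiv_apply_const_const hS, this.fderiv_eq, fderiv_apply_const_const hS]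

end BilinearField

section RadialExtension

open Filter Topology

variable {E F : Type*} [NormedAddCommGroup E] [InnerProductSpace ℝ E] [NormedAddCommGroup F]
  [NormedSpace ℝ F] {T : E → F} {x p v : E} {t : ℝ}

/-- The extension of `T` from the unit sphere to a map homogeneous of degree `-1`. It is `0` at the
origin. -/
noncomputable def radialExtension (T : E → F) (x : E) : F := ‖x‖⁻¹ • T (‖x‖⁻¹ • x)

theorem radialExtension_of_norm_eq_one (hp : ‖p‖ = 1) : radialExtension T p = T p := by
  simp [radialExtension, hp]

theorem radialExtension_smul (ht : 0 < t) :
    radialExtension T (t • x) = t⁻¹ • radialExtension T x := by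
  simp only [radialExtension, norm_smul, Real.norm_of_nonneg ht.le, mul_inv, smul_smul]
  congr 3
  field_simp

theorem differentiableAt_radialExtension (hT : DifferentiableAt ℝ T (‖x‖⁻¹ • x)) (hx : x ≠ 0) :
    DifferentiableAt ℝ (radialExtension T) x := by
  have hinv : DifferentiableAt ℝ (fun y : E ↦ ‖y‖⁻¹) x :=
    (differentiableAt_id.norm ℝ hx).inv (norm_ne_zero_iff.2 hx)
  exact hinv.smul (hT.comp (f := fun y : E ↦ ‖y‖⁻¹ • y) x (hinv.smul differentiableAt_id))

theorem fderiv_radialExtension_self (h : DifferentiableAt ℝ (radialExtension T) x) :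
    fderiv ℝ (radialExtension T) x x = -radialExtension T x := by
  have hline : HasDerivAt (fun t : ℝ ↦ radialExtension T (t • x))
      (fderiv ℝ (radialExtension T) x x) 1 := by
    have hsmul : HasDerivAt (fun t : ℝ ↦ t • x) x 1 := by
      simpa using (hasDerivAt_id (1 : ℝ)).smul_const x
    exact HasFDerivAt.comp_hasDerivAt 1 (by simpa using h.hasFDerivAt) hsmul
  have hinv : HasDerivAt (fun t : ℝ ↦ t⁻¹ • radialExtension T x) (-radialExtension T x) 1 := by
    simpa using (hasDerivAt_inv (one_ne_zero (α := ℝ))).smul_const (radialExtension T x)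
  refine hline.unique (hinv.congr_of_eventuallyEq ?_)
  filter_upwards [lt_mem_nhds one_pos] with t ht using radialExtension_smul ht

theorem fderiv_radialExtension_smul (ht : 0 < t) :
    fderiv ℝ (radialExtension T) (t • x) = (t ^ 2)⁻¹ • fderiv ℝ (radialExtension T) x := by
  have hscale : t • fderiv ℝ (radialExtension T) (t • x) =
      t⁻¹ • fderiv ℝ (radialExtension T) x := by
    rw [← fderiv_comp_smul, ← Pi.smul_apply, ← fderiv_const_smul_field]
    exact congrArg (fderiv ℝ · x) (funext fun y ↦ radialExtension_smul ht)
  rw [← inv_smul_smul₀ ht.ne' (fderiv ℝ _ (t • x)), hscale, smul_smul, sq, mul_inv]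

theorem hasFDerivAt_norm_inv_of_norm_eq_one (hp : ‖p‖ = 1) :
    HasFDerivAt (fun y : E ↦ ‖y‖⁻¹) (-innerSL ℝ p) p := by
  have hnorm : HasFDerivAt (fun y : E ↦ ‖y‖) (innerSL ℝ p) p := by
    simpa [hp, smul_smul, ← Nat.cast_smul_eq_nsmul ℝ] using
      (hasStrictFDerivAt_norm_sq p).hasFDerivAt.sqrt (by simp [hp])
  simpa [hp, Function.comp_def] using
    (hasDerivAt_inv (norm_ne_zero_iff.2 (ne_zero_of_norm_ne_zero (by simp [hp])))).comp_hasFDerivAt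
      p hnorm

theorem fderiv_radialExtension_of_inner_eq_zero (hT : DifferentiableAt ℝ T p) (hp : ‖p‖ = 1)
    (hv : ⟪v, p⟫ = 0) : fderiv ℝ (radialExtension T) p v = fderiv ℝ T p v := by
  have hinv := hasFDerivAt_norm_inv_of_norm_eq_one hp
  have hT' : HasFDerivAt T (fderiv ℝ T p) (‖p‖⁻¹ • p) := by simpa [hp] using hT.hasFDerivAt
  have hunit : HasFDerivAt (fun y : E ↦ ‖y‖⁻¹ • y) _ p := hinv.fun_smul (hasFDerivAt_id p)
  have h : HasFDerivAt (radialExtension T) _ p :=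
    hinv.fun_smul (HasFDerivAt.comp (f := fun y ↦ ‖y‖⁻¹ • y) p hT' hunit)
  rw [real_inner_comm] at hv
  simp [h.fderiv, hp, hv]

end RadialExtension

section Orthogonal

variable {E F : Type*} [NormedAddCommGroup E] [InnerProductSpace ℝ E] [NormedAddCommGroup F]
  [NormedSpace ℝ F]

theorem clm_ext_of_inner_eq_zero {f g : E →L[ℝ] F} (p : E) (hself : f p = g p)
    (horth : ∀ v, ⟪v, p⟫ = 0 → f v = g v) : f = g := by
  ext v
  obtain ⟨y, hy, z, hz, rfl⟩ := (Submodule.span ℝ {p}).exists_add_mem_mem_orthogonal v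
  obtain ⟨c, rfl⟩ := Submodule.mem_span_singleton.1 hy
  rw [map_add, map_add, map_smul, map_smul, hself,
    horth z (Submodule.mem_orthogonal_singleton_iff_inner_left.1 hz)]

theorem clm_apply_comm_of_inner_eq_zero {B : E →L[ℝ] E →L[ℝ] F} (p : E)
    (hself : ∀ a, ⟪a, p⟫ = 0 → B a p = B p a)
    (horth : ∀ a b, ⟪a, p⟫ = 0 → ⟪b, p⟫ = 0 → B a b = B b a) (a b : E) : B a b = B b a := by
  suffices B = B.flip from DFunLike.congr_fun (DFunLike.congr_fun this a) b
  refine clm_ext_of_inner_eq_zero p ?_ fun a ha ↦ ?_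
  · exact clm_ext_of_inner_eq_zero p rfl fun b hb ↦ (hself b hb).symm
  · exact clm_ext_of_inner_eq_zero p (hself a ha) fun b hb ↦ horth a b ha hb

end Orthogonal

section Divergence

open Filter Topology

variable {ι F : Type*} [Fintype ι] [DecidableEq ι] [NormedAddCommGroup F] [NormedSpace ℝ F]

/-- The divergence of an `F`-valued one-form `ω` on Euclidean space, i.e. the divergence of the
vector field dual to `ω` when `F = ℝ`. It is a junk value where `ω` is not differentiable. -/
noncomputable def divergence (ω : EuclideanSpace ℝ ι → EuclideanSpace ℝ ι →L[ℝ] F)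
    (x : EuclideanSpace ℝ ι) : F :=
  ∑ i, fderiv ℝ ω x (EuclideanSpace.single i 1) (EuclideanSpace.single i 1)

theorem sum_coord_smul_apply_single (L : EuclideanSpace ℝ ι →L[ℝ] F) (v : EuclideanSpace ℝ ι) :
    ∑ i, v i • L (EuclideanSpace.single i 1) = L v := by
  conv_rhs => rw [← (EuclideanSpace.basisFun ι ℝ).sum_repr v]
  simp only [map_sum, map_smul, EuclideanSpace.basisFun_repr, EuclideanSpace.basisFun_apply]

theorem divergence_smul {g : EuclideanSpace ℝ ι → ℝ}
    {ω : EuclideanSpace ℝ ι → EuclideanSpace ℝ ι →L[ℝ] F} {x : EuclideanSpace ℝ ι}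
    (hg : DifferentiableAt ℝ g x) (hω : DifferentiableAt ℝ ω x) :
    divergence (fun y ↦ g y • ω y) x = g x • divergence ω x +
      ∑ i, fderiv ℝ g x (EuclideanSpace.single i 1) • ω x (EuclideanSpace.single i 1) := by
  simp [divergence, fderiv_fun_smul hg hω, Finset.sum_add_distrib, Finset.smul_sum]

theorem divergence_smul_smul_of_radial {ψ u : EuclideanSpace ℝ ι → ℝ}
    {ω : EuclideanSpace ℝ ι → EuclideanSpace ℝ ι →L[ℝ] ℝ} {x : EuclideanSpace ℝ ι} {a : ℝ}
    (hψ : DifferentiableAt ℝ ψ x) (hψ' : fderiv ℝ ψ x = a • innerSL ℝ x)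
    (hu : HasFDerivAt u (ω x) x) (hω : DifferentiableAt ℝ ω x) (hdiv : divergence ω x = 0)
    (hrad : ω x x = 0) :
    divergence (fun y ↦ ψ y • u y • ω y) x =
      ψ x * ∑ i, ω x (EuclideanSpace.single i 1) ^ 2 := by
  have hψω :
      ∑ i, fderiv ℝ ψ x (EuclideanSpace.single i 1) * ω x (EuclideanSpace.single i 1) = 0 := by
    have hsum := sum_coord_smul_apply_single (ω x) x
    simp only [smul_eq_mul, hrad] at hsum
    simp [hψ', mul_assoc, ← Finset.mul_sum, EuclideanSpace.inner_single_right, hsum]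
  have huω : divergence (fun y ↦ u y • ω y) x = ∑ i, ω x (EuclideanSpace.single i 1) ^ 2 := by
    rw [divergence_smul hu.differentiableAt hω, hdiv, smul_zero, zero_add, hu.fderiv]
    exact Finset.sum_congr rfl fun i _ ↦ (sq _).symm
  rw [divergence_smul hψ (hu.differentiableAt.fun_smul hω), huω]
  simp [mul_left_comm _ (u x), ← Finset.mul_sum, hψω]

theorem sum_fderiv_apply_single_eq_zero
    {S : EuclideanSpace ℝ ι → EuclideanSpace ℝ ι →L[ℝ] EuclideanSpace ℝ ι →L[ℝ] F}
    {x : EuclideanSpace ℝ ι} (hS : DifferentiableAt ℝ S x)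
    (htrace : ∀ᶠ y in 𝓝 x, ∑ i, S y (EuclideanSpace.single i 1) (EuclideanSpace.single i 1) = 0)
    (v : EuclideanSpace ℝ ι) :
    ∑ i, fderiv ℝ S x v (EuclideanSpace.single i 1) (EuclideanSpace.single i 1) = 0 := by
  have hzero : fderiv ℝ (fun y ↦ ∑ i, S y (EuclideanSpace.single i 1)
      (EuclideanSpace.single i 1)) x v = 0 := by
    rw [EventuallyEq.fderiv_eq (f := fun _ ↦ 0) htrace]
    simp
  rw [fderiv_fun_sum fun i _ ↦ (hS.clm_apply (differentiableAt_const _)).clm_apply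
    (differentiableAt_const _)] at hzero
  simpa [fderiv_apply_const_const hS] using hzero

end Divergence

section Sphere

open Filter MeasureTheory Topology

variable {n : ℕ}

local notation "ℝⁿ⁺¹" => EuclideanSpace ℝ (Fin (n + 1))

theorem integral_divergence_eq_zero_of_hasCompactSupport {F : Type*} [NormedAddCommGroup F]
    [NormedSpace ℝ F] {ω : ℝⁿ⁺¹ → ℝⁿ⁺¹ →L[ℝ] F} (hω : Differentiable ℝ ω)
    (hsupp : HasCompactSupport ω) (hint : Integrable (divergence ω)) :
    ∫ x, divergence ω x = 0 := by
  -- Only the sum over `i` is known to be integrable, so the coordinates cannot be integrated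
  -- by parts separately.
  let L : (Fin (n + 1) → ℝ) ≃L[ℝ] ℝⁿ⁺¹ := (EuclideanSpace.equiv (Fin (n + 1)) ℝ).symm
  have hL : MeasurePreserving L := PiLp.volume_preserving_toLp (Fin (n + 1))
  have hLemb : MeasurableEmbedding L := L.toHomeomorph.measurableEmbedding
  obtain ⟨R, hR0, hR⟩ := hsupp.isCompact.isBounded.subset_ball_lt 0 0
  have hout {y : Fin (n + 1) → ℝ} {i : Fin (n + 1)} (hy : R ≤ |y i|) : L y ∉ tsupport ω :=
    fun hmem ↦ hy.not_gt ((PiLp.norm_apply_le (L y) i).trans_lt (mem_ball_zero_iff.1 (hR hmem)))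
  let f (i : Fin (n + 1)) (y : Fin (n + 1) → ℝ) : F := ω (L y) (EuclideanSpace.single i 1)
  let f' (i : Fin (n + 1)) (y : Fin (n + 1) → ℝ) : (Fin (n + 1) → ℝ) →L[ℝ] F :=
    ((fderiv ℝ ω (L y)).comp (L : (Fin (n + 1) → ℝ) →L[ℝ] ℝⁿ⁺¹)).flip (EuclideanSpace.single i 1)
  have hf (i : Fin (n + 1)) (y : Fin (n + 1) → ℝ) : HasFDerivAt (f i) (f' i y) y := by
    simpa [f, f'] using ((hω (L y)).hasFDerivAt.comp y L.hasFDerivAt).clm_apply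
      (hasFDerivAt_const (EuclideanSpace.single i (1 : ℝ)) y)
  have hdiv (y : Fin (n + 1) → ℝ) : ∑ i, f' i y (Pi.single i 1) = divergence ω (L y) := by
    simp [divergence, f', L]
  have hface {y : Fin (n + 1) → ℝ} (i : Fin (n + 1)) (hy : |y i| = R) : f i y = 0 := by
    simp [f, image_eq_zero_of_notMem_tsupport (hout hy.ge)]
  have hbox (y : Fin (n + 1) → ℝ) (hy : y ∉ Set.Icc (fun _ ↦ -R) fun _ ↦ R) :
      divergence ω (L y) = 0 := by
    obtain ⟨i, hi⟩ : ∃ i, R ≤ |y i| := by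
      by_contra! h
      exact hy ⟨fun i ↦ (abs_lt.1 (h i)).1.le, fun i ↦ (abs_lt.1 (h i)).2.le⟩
    simp [divergence, fderiv_of_notMem_tsupport ℝ (hout hi)]
  have hgreen := integral_divergence_of_hasFDerivAt_off_countable' (fun _ ↦ -R) (fun _ ↦ R)
    (fun _ ↦ neg_le_self hR0.le) f f' ∅ Set.countable_empty
    (fun i y _ ↦ (hf i y).continuousAt.continuousWithinAt) (fun y _ i ↦ hf i y)
    (by simpa only [hdiv, Function.comp_def] using
      ((hL.integrable_comp_emb hLemb).2 hint).integrableOn)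
  rw [← hL.integral_comp hLemb, ← setIntegral_eq_integral_of_forall_compl_eq_zero hbox]
  simpa [hdiv, hface, abs_of_pos hR0] using hgreen

theorem eq_zero_of_fderiv_symm_of_divergence_eq_zero (hn : 2 ≤ n)
    {ω : ℝⁿ⁺¹ → ℝⁿ⁺¹ →L[ℝ] ℝ} (hω : ∀ x ≠ 0, DifferentiableAt ℝ ω x)
    (hsymm : ∀ x ≠ 0, ∀ v w, fderiv ℝ ω x v w = fderiv ℝ ω x w v)
    (hdiv : ∀ x ≠ 0, divergence ω x = 0) (hrad : ∀ x ≠ 0, ω x x = 0) {x₀ : ℝⁿ⁺¹}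
    (hx₀ : x₀ ≠ 0) : ω x₀ = 0 := by
  have hrank : 2 < Module.rank ℝ ℝⁿ⁺¹ := by
    rw [← Module.finrank_eq_rank, finrank_euclideanSpace_fin]
    exact_mod_cast Nat.lt_succ_of_le hn
  obtain ⟨u, hu⟩ := exists_forall_hasFDerivAt_of_two_lt_rank hrank hω hsymm
  obtain ⟨ψ, hψ, hψsupp, hψnonneg, hψx₀, hψ0, hψ'⟩ := exists_radial_cutoff hx₀
  let q (x : ℝⁿ⁺¹) : ℝ := ∑ i, ω x (EuclideanSpace.single i 1) ^ 2
  have hflux : divergence (fun x ↦ ψ x • u x • ω x) = fun x ↦ ψ x * q x := by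
    funext x
    rcases eq_or_ne x 0 with rfl | hx
    · have h0 : (fun x ↦ ψ x • u x • ω x) =ᶠ[𝓝 0] 0 := by
        filter_upwards [hψ0] with x hx
        simp [hx]
      simp [divergence, h0.fderiv_eq, hψ0.eq_of_nhds]
    · obtain ⟨a, ha⟩ := hψ' x
      exact divergence_smul_smul_of_radial (hψ x) ha (hu x hx) (hω x hx) (hdiv x hx) (hrad x hx)
  have hcont : Continuous fun x ↦ ψ x * q x :=
    (differentiable_smul_of_eventuallyEq_zero hψ hψ0 fun x hx ↦
      .fun_sum fun i _ ↦ ((hω x hx).clm_apply (differentiableAt_const _)).pow 2).continuous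
  have hint : ∫ x, ψ x * q x = 0 := by
    rw [← hflux]
    refine integral_divergence_eq_zero_of_hasCompactSupport
      (differentiable_smul_of_eventuallyEq_zero hψ hψ0 fun x hx ↦
        (hu x hx).differentiableAt.smul (hω x hx)) hψsupp.smul_right ?_
    rw [hflux]
    exact hcont.integrable_of_hasCompactSupport hψsupp.mul_right
  have hq : q x₀ = 0 := by
    by_contra hne
    refine (hcont.integral_pos_of_hasCompactSupport_nonneg_nonzero hψsupp.mul_right
      (fun x ↦ mul_nonneg (hψnonneg x) (Finset.sum_nonneg fun i _ ↦ sq_nonneg _))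
      (x := x₀) ?_).ne' hint
    rwa [hψx₀, one_mul]
  ext v
  have hcoord (i) : ω x₀ (EuclideanSpace.single i 1) = 0 :=
    pow_eq_zero_iff two_ne_zero |>.1 <|
      (Finset.sum_eq_zero_iff_of_nonneg fun i _ ↦ sq_nonneg _).1 hq i (Finset.mem_univ i)
  simp [← sum_coord_smul_apply_single, hcoord]

theorem eq_zero_of_fderiv_symm_of_trace_eq_zero (hn : 2 ≤ n)
    {S : ℝⁿ⁺¹ → ℝⁿ⁺¹ →L[ℝ] ℝⁿ⁺¹ →L[ℝ] ℝ} (hS : ∀ x ≠ 0, DifferentiableAt ℝ S x)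
    (hsymm : ∀ x ≠ 0, ∀ a b, S x a b = S x b a) (hrad : ∀ x ≠ 0, S x x = 0)
    (hcodazzi : ∀ x ≠ 0, ∀ a b, fderiv ℝ S x a b = fderiv ℝ S x b a)
    (htrace : ∀ x ≠ 0,
      ∑ i, S x (EuclideanSpace.single i 1) (EuclideanSpace.single i 1) = 0)
    {x : ℝⁿ⁺¹} (hx : x ≠ 0) : S x = 0 := by
  have hsymm' (x) (hx : x ≠ 0) (v a b) : fderiv ℝ S x v a b = fderiv ℝ S x v b a :=
    fderiv_apply_comm (hS x hx) ((eventually_ne_nhds hx).mono hsymm) v a b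
  ext1 z
  refine eq_zero_of_fderiv_symm_of_divergence_eq_zero (ω := fun y ↦ S y z) hn
    (fun x hx ↦ (hS x hx).clm_apply (differentiableAt_const z)) (fun x hx v w ↦ ?_)
    (fun x hx ↦ ?_) (fun x hx ↦ ?_) hx
  · rw [fderiv_apply_const (hS x hx), fderiv_apply_const (hS x hx), hcodazzi x hx v, hsymm' x hx,
      hcodazzi x hx z]
  · have htr := sum_fderiv_apply_single_eq_zero (hS x hx) ((eventually_ne_nhds hx).mono htrace) z
    simpa only [divergence, fderiv_apply_const (hS x hx), hcodazzi x hx _ z] using htr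
  · rw [hsymm x hx, hrad x hx, zero_apply]

theorem tanProj_of_inner_eq_zero {p v : ℝⁿ⁺¹} (hv : ⟪v, p⟫ = 0) : tanProj p v = v := by
  simp [tanProj, hv]

theorem tanProj_smul_self {p : ℝⁿ⁺¹} (hp : ‖p‖ = 1) (c : ℝ) : tanProj p (c • p) = 0 := by
  simp [tanProj, inner_smul_left, hp]

theorem hasFDerivAt_tanProj (p v : ℝⁿ⁺¹) :
    HasFDerivAt (tanProj · v)
      (-(⟪v, p⟫ • ContinuousLinearMap.id ℝ ℝⁿ⁺¹ + (innerSL ℝ v).smulRight p)) p :=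
  ((innerSL ℝ v).hasFDerivAt.smul (hasFDerivAt_id p)).const_sub v

theorem covDerivT_eq_fderiv {T : ℝⁿ⁺¹ → ℝⁿ⁺¹ →L[ℝ] ℝⁿ⁺¹ →L[ℝ] ℝ} {p X Y Z : ℝⁿ⁺¹}
    (hT : DifferentiableAt ℝ T p) (hp : ‖p‖ = 1) (hleft : T p p = 0) (hright : ∀ v, T p v p = 0)
    (hY : ⟪Y, p⟫ = 0) (hZ : ⟪Z, p⟫ = 0) : covDerivT T p X Y Z = fderiv ℝ T p X Y Z := by
  have hproj {v : ℝⁿ⁺¹} (hv : ⟪v, p⟫ = 0) :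
      fderiv ℝ (fun x ↦ tanProj x v) p X = (-⟪v, X⟫) • p := by
    simp [(hasFDerivAt_tanProj p v).fderiv, hv]
  have h := (hT.hasFDerivAt.clm_apply (hasFDerivAt_tanProj p Y)).clm_apply
    (hasFDerivAt_tanProj p Z)
  rw [covDerivT, hproj hY, hproj hZ, h.fderiv, tanProj_smul_self hp, tanProj_smul_self hp]
  simp [tanProj_of_inner_eq_zero, hY, hZ, hleft, hright]

namespace IsTraceFreeCodazziSphere

variable {T : EuclideanSpace ℝ (Fin (n + 1)) →
  EuclideanSpace ℝ (Fin (n + 1)) →L[ℝ] EuclideanSpace ℝ (Fin (n + 1)) →L[ℝ] ℝ}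
  {p x : EuclideanSpace ℝ (Fin (n + 1))}

theorem fderiv_apply_comm_of_inner_eq_zero (hT : IsTraceFreeCodazziSphere T) (hp : ‖p‖ = 1)
    {X Y Z : ℝⁿ⁺¹} (hX : ⟪X, p⟫ = 0) (hY : ⟪Y, p⟫ = 0) (hZ : ⟪Z, p⟫ = 0) :
    fderiv ℝ T p X Y Z = fderiv ℝ T p Y X Z := by
  have hsphere : p ∈ Metric.sphere 0 1 := by simpa using hp
  have hleft : T p p = 0 := ContinuousLinearMap.ext (hT.tangential p hsphere)
  have hright (v) : T p v p = 0 := by rw [hT.symm, hT.tangential p hsphere]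
  rw [← covDerivT_eq_fderiv (hT.diff p) hp hleft hright hY hZ,
    hT.codazzi p hsphere X Y Z hX hY hZ, covDerivT_eq_fderiv (hT.diff p) hp hleft hright hX hZ]

theorem radialExtension_symm (hT : IsTraceFreeCodazziSphere T) (x a b : ℝⁿ⁺¹) :
    radialExtension T x a b = radialExtension T x b a := by
  simp [radialExtension, hT.symm _ a b]

theorem radialExtension_apply_self (hT : IsTraceFreeCodazziSphere T) (hx : x ≠ 0) :
    radialExtension T x x = 0 := by
  have hT' : T (‖x‖⁻¹ • x) (‖x‖⁻¹ • x) = 0 :=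
    ContinuousLinearMap.ext (hT.tangential _ (by simp [norm_smul, hx]))
  simpa [radialExtension, map_smul] using hT'

theorem trace_radialExtension (hT : IsTraceFreeCodazziSphere T) (hx : x ≠ 0) :
    ∑ i, radialExtension T x (EuclideanSpace.single i 1) (EuclideanSpace.single i 1) = 0 := by
  have hT' := hT.traceFree (‖x‖⁻¹ • x) (by simp [norm_smul, hx])
  simp [radialExtension, ← Finset.mul_sum, hT']

theorem fderiv_radialExtension_comm_of_norm_eq_one (hT : IsTraceFreeCodazziSphere T)
    (hp : ‖p‖ = 1) (a b : ℝⁿ⁺¹) :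
    fderiv ℝ (radialExtension T) p a b = fderiv ℝ (radialExtension T) p b a := by
  have hp0 : p ≠ 0 := ne_zero_of_norm_ne_zero (by simp [hp])
  have hS := differentiableAt_radialExtension (T := T) (hT.diff _) hp0
  have hradial (v) : fderiv ℝ (radialExtension T) p v p = -radialExtension T p v :=
    fderiv_apply_self_eq_neg hS
      ((eventually_ne_nhds hp0).mono fun _ ↦ hT.radialExtension_apply_self) v
  have hsymm := fderiv_apply_comm hS (.of_forall hT.radialExtension_symm)
  refine clm_apply_comm_of_inner_eq_zero p (fun X _ ↦ ?_) (fun X Y hX hY ↦ ?_) a b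
  · rw [hradial, fderiv_radialExtension_self hS, neg_apply]
  · refine clm_ext_of_inner_eq_zero p ?_ fun Z hZ ↦ ?_
    · rw [hsymm X, hradial, hsymm Y, hradial, neg_apply, neg_apply, hT.radialExtension_symm]
    · rw [fderiv_radialExtension_of_inner_eq_zero (hT.diff p) hp hX,
        fderiv_radialExtension_of_inner_eq_zero (hT.diff p) hp hY,
        hT.fderiv_apply_comm_of_inner_eq_zero hp hX hY hZ]

theorem fderiv_radialExtension_comm (hT : IsTraceFreeCodazziSphere T) (hx : x ≠ 0) (a b : ℝⁿ⁺¹) :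
    fderiv ℝ (radialExtension T) x a b = fderiv ℝ (radialExtension T) x b a := by
  have hunit : ‖‖x‖⁻¹ • x‖ = 1 := norm_smul_inv_norm hx
  rw [← smul_inv_smul₀ (norm_ne_zero_iff.2 hx) x, fderiv_radialExtension_smul (norm_pos_iff.2 hx)]
  simp only [smul_apply, hT.fderiv_radialExtension_comm_of_norm_eq_one hunit a b]

theorem eq_zero (hT : IsTraceFreeCodazziSphere T) (hn : 2 ≤ n)
    (hp : p ∈ Metric.sphere (0 : ℝⁿ⁺¹) 1) : T p = 0 := by
  have hp : ‖p‖ = 1 := by simpa using hp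
  rw [← radialExtension_of_norm_eq_one (T := T) hp]
  exact eq_zero_of_fderiv_symm_of_trace_eq_zero hn
    (fun x hx ↦ differentiableAt_radialExtension (T := T) (hT.diff _) hx)
    (fun x _ ↦ hT.radialExtension_symm x) (fun x hx ↦ hT.radialExtension_apply_self hx)
    (fun x hx ↦ hT.fderiv_radialExtension_comm hx) (fun x hx ↦ hT.trace_radialExtension hx)
    (ne_zero_of_norm_ne_zero (by simp [hp]))

end IsTraceFreeCodazziSphere

end Sphere

/- STATEMENT 7: A trace-free Codazzi tensor on the round unit sphere S^n(1) (n ≥ 2)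
vanishes identically. Consequently, for an infinitesimal isometric deformation k of
S^n(1) ⊂ ℝ^{n+1} with k^T = 0, the linearized second fundamental form A'_k — which is
a trace-free Codazzi tensor — must vanish. -/
theorem stmt_7 (n : ℕ) (hn : 2 ≤ n) :
    (∀ T : EuclideanSpace ℝ (Fin (n+1)) →
        EuclideanSpace ℝ (Fin (n+1)) →L[ℝ] EuclideanSpace ℝ (Fin (n+1)) →L[ℝ] ℝ,
      IsTraceFreeCodazziSphere T →
        ∀ p ∈ Metric.sphere (0 : EuclideanSpace ℝ (Fin (n+1))) 1, T p = 0) ∧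
    (∀ A'k : EuclideanSpace ℝ (Fin (n+1)) →
        EuclideanSpace ℝ (Fin (n+1)) →L[ℝ] EuclideanSpace ℝ (Fin (n+1)) →L[ℝ] ℝ,
      -- A'_k : the linearized second fundamental form of a deformation k with
      -- k^T = 0 and H'_k = 0, which is a trace-free Codazzi tensor
      IsTraceFreeCodazziSphere A'k →
        ∀ p ∈ Metric.sphere (0 : EuclideanSpace ℝ (Fin (n+1))) 1, A'k p = 0) :=
  ⟨fun _ hT _ hp ↦ hT.eq_zero hn hp, fun _ hA _ hp ↦ hA.eq_zero hn hp⟩
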